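/- (Permutation equivariance of random-edge GNNs.) Let m, L be positive integers, F_0,…,F_L positive integers (feature dimensions), and for each layer l = 1,…,L let K_l be a positive integer (filter length), Ψ_{l,k} ∈ ℝ^{F_{l−1}×F_l} for k = 0,…,K_l−1 filter taps, and φ_l : ℝ → ℝ a function applied entrywise. Given an m×m real matrix H and an m×F_0 real matrix Z, define the GNN output recursively by Y_0(H,Z) = Z and Y_l(H,Z) = φ_l applied entrywise to Σ_{k=0}^{K_l−1} H^k Y_{l−1}(H,Z) Ψ_{l,k}. Then for any permutation σ of Fin m with permutation matrix P_σ, the output on the permuted inputs equals the permuted output: Y_L(P_σ H P_σᵀ, P_σ Z) = P_σ Y_L(H, Z). -/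

import Mathlib

open Matrix

/-- The permutation matrix of `σ`: entry `(i, j)` is `1` if `j = σ i` and `0` otherwise. -/
def permMat {m : ℕ} (σ : Equiv.Perm (Fin m)) : Matrix (Fin m) (Fin m) ℝ :=
  fun i j => if j = σ i then 1 else 0

/-- The output of layer `l` of a GNN with feature dimensions `Fdim`, filter lengths `K`,
filter taps `Ψ` (with `Ψ l k ∈ ℝ^{Fdim l × Fdim (l+1)}` the `k`-th tap of layer `l + 1`)
and entrywise nonlinearities `φ`, run on graph shift operator `H` with input signal `Z`:
`Y_0 = Z` and `Y_{l+1} = φ_{l+1}(Σ_{k < K (l+1)} H^k Y_l Ψ_{l+1,k})` entrywise. -/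
noncomputable def gnnOut {m : ℕ} (Fdim : ℕ → ℕ) (K : ℕ → ℕ)
    (Ψ : (l : ℕ) → ℕ → Matrix (Fin (Fdim l)) (Fin (Fdim (l + 1))) ℝ)
    (φ : ℕ → ℝ → ℝ)
    (H : Matrix (Fin m) (Fin m) ℝ) (Z : Matrix (Fin m) (Fin (Fdim 0)) ℝ) :
    (l : ℕ) → Matrix (Fin m) (Fin (Fdim l)) ℝ
  | 0 => Z
  | l + 1 =>
      (∑ k ∈ Finset.range (K (l + 1)), H ^ k * gnnOut Fdim K Ψ φ H Z l * Ψ l k).map (φ (l + 1))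

/-!
Pulling a signal back along a map `f` of nodes is left multiplication by a matrix `P`. It commutes
with entrywise maps because every row of `P` has a single nonzero entry, equal to `1`, and with
right multiplication by the filter taps by associativity. If moreover `H' P = P H`, then
`H' ^ k P = P H ^ k`, so every layer commutes with the pullback. For a permutation,
`Pᵀ P = 1` gives this intertwining relation with `H' = P H Pᵀ`.
-/

section GraphConv

variable {ι κ α β R : Type*} [Fintype ι] [DecidableEq ι] [Fintype κ] [DecidableEq κ] [Fintype α]
  [Semiring R]

/-- The graph convolution `∑ k < K, H ^ k * Y * Ψ k` of the signal `Y` on the graph with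
shift operator `H`; only the first `K` terms of the sequence `Ψ` of filter taps enter. -/
def graphConv (H : Matrix ι ι R) (K : ℕ) (Ψ : ℕ → Matrix α β R) (Y : Matrix ι α R) :
    Matrix ι β R :=
  ∑ k ∈ Finset.range K, H ^ k * Y * Ψ k

theorem pow_mul_eq_mul_pow_of_intertwines {H' : Matrix ι ι R} {H : Matrix κ κ R}
    {P : Matrix ι κ R} (hP : H' * P = P * H) (k : ℕ) : H' ^ k * P = P * H ^ k := by
  induction k with
  | zero => simp
  | succ k ih =>
    calc H' ^ (k + 1) * P = H' ^ k * (H' * P) := by rw [pow_succ, Matrix.mul_assoc]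
      _ = (H' ^ k * P) * H := by rw [hP, Matrix.mul_assoc]
      _ = P * H ^ (k + 1) := by rw [ih, Matrix.mul_assoc, pow_succ]

theorem graphConv_mul_of_intertwines {H' : Matrix ι ι R} {H : Matrix κ κ R} {P : Matrix ι κ R}
    (hP : H' * P = P * H) (K : ℕ) (Ψ : ℕ → Matrix α β R) (Y : Matrix κ α R) :
    graphConv H' K Ψ (P * Y) = P * graphConv H K Ψ Y := by
  simp only [graphConv, Matrix.mul_sum]
  refine Finset.sum_congr rfl fun k _ => ?_
  calc H' ^ k * (P * Y) * Ψ k = H' ^ k * P * Y * Ψ k := by rw [← Matrix.mul_assoc (H' ^ k)]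
    _ = P * (H ^ k * Y * Ψ k) := by
      rw [pow_mul_eq_mul_pow_of_intertwines hP, Matrix.mul_assoc P, Matrix.mul_assoc P]

end GraphConv

section PullbackMatrix

variable {ι κ α R S : Type*} [DecidableEq κ]

/-- The matrix `P` of the pullback of signals along `f : ι → κ`, so that `(P v)_i = v_{f i}`. For a
permutation `f` it is the permutation matrix. -/
def pullbackMatrix (R : Type*) [Zero R] [One R] (f : ι → κ) : Matrix ι κ R :=
  (1 : Matrix κ κ R).submatrix f id

theorem pullbackMatrix_mul [Fintype κ] [NonAssocSemiring R] (f : ι → κ) (M : Matrix κ α R) :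
    pullbackMatrix R f * M = M.submatrix f id :=
  one_submatrix_mul f (Equiv.refl κ) M

theorem map_pullbackMatrix_mul [Fintype κ] [NonAssocSemiring R] [NonAssocSemiring S] (f : ι → κ)
    (M : Matrix κ α R) (g : R → S) :
    (pullbackMatrix R f * M).map g = pullbackMatrix S f * M.map g := by
  rw [pullbackMatrix_mul, pullbackMatrix_mul, submatrix_map]

theorem transpose_pullbackMatrix_mul_self [Fintype ι] [NonAssocSemiring R] (e : ι ≃ κ) :
    (pullbackMatrix R e)ᵀ * pullbackMatrix R e = 1 := by
  let := Fintype.ofEquiv ι e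
  rw [pullbackMatrix, transpose_submatrix, transpose_one, submatrix_mul_equiv, Matrix.mul_one,
    submatrix_id_id]

theorem pullbackMatrix_conj_mul [Fintype ι] [Fintype κ] [Semiring R] (e : ι ≃ κ)
    (H : Matrix κ κ R) :
    pullbackMatrix R e * H * (pullbackMatrix R e)ᵀ * pullbackMatrix R e =
      pullbackMatrix R e * H := by
  rw [Matrix.mul_assoc, transpose_pullbackMatrix_mul_self, Matrix.mul_one]

end PullbackMatrix

theorem permMat_eq_pullbackMatrix {m : ℕ} (σ : Equiv.Perm (Fin m)) :
    permMat σ = pullbackMatrix ℝ σ := by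
  ext i j
  simp only [permMat, pullbackMatrix, submatrix_apply, one_apply, id_eq, eq_comm]

section GNN

variable {m n : ℕ} (Fdim K : ℕ → ℕ)
  (Ψ : (l : ℕ) → ℕ → Matrix (Fin (Fdim l)) (Fin (Fdim (l + 1))) ℝ) (φ : ℕ → ℝ → ℝ)

theorem gnnOut_succ (H : Matrix (Fin m) (Fin m) ℝ) (Z : Matrix (Fin m) (Fin (Fdim 0)) ℝ) (l : ℕ) :
    gnnOut Fdim K Ψ φ H Z (l + 1) =
      (graphConv H (K (l + 1)) (Ψ l) (gnnOut Fdim K Ψ φ H Z l)).map (φ (l + 1)) :=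
  rfl

/-- Entrywise, `hf` says that the `H' i j` with `f j = a` sum to `H (f i) a`; the adjacency matrices
of a graph covering `f` satisfy it. -/
theorem gnn_perm_equivariant_general {H' : Matrix (Fin n) (Fin n) ℝ}
    {H : Matrix (Fin m) (Fin m) ℝ} {f : Fin n → Fin m}
    (hf : H' * pullbackMatrix ℝ f = pullbackMatrix ℝ f * H)
    (Z : Matrix (Fin m) (Fin (Fdim 0)) ℝ) (L : ℕ) :
    gnnOut Fdim K Ψ φ H' (pullbackMatrix ℝ f * Z) L =
      pullbackMatrix ℝ f * gnnOut Fdim K Ψ φ H Z L := by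
  induction L with
  | zero => rfl
  | succ l ih =>
    rw [gnnOut_succ, ih, graphConv_mul_of_intertwines hf, map_pullbackMatrix_mul, gnnOut_succ]

end GNN

/-- Permutation equivariance of (random edge) graph neural networks: the `L`-layer GNN
output on the permuted inputs `(P_σ H P_σᵀ, P_σ Z)` equals the permutation of the GNN
output on `(H, Z)`. -/
theorem gnn_perm_equivariant {m L : ℕ} (hm : 0 < m) (hL : 0 < L)
    (Fdim : ℕ → ℕ) (hFdim : ∀ l, 0 < Fdim l) (K : ℕ → ℕ) (hK : ∀ l, 0 < K l)
    (Ψ : (l : ℕ) → ℕ → Matrix (Fin (Fdim l)) (Fin (Fdim (l + 1))) ℝ)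
    (φ : ℕ → ℝ → ℝ)
    (H : Matrix (Fin m) (Fin m) ℝ) (Z : Matrix (Fin m) (Fin (Fdim 0)) ℝ)
    (σ : Equiv.Perm (Fin m)) :
    gnnOut Fdim K Ψ φ (permMat σ * H * (permMat σ)ᵀ) (permMat σ * Z) L
      = permMat σ * gnnOut Fdim K Ψ φ H Z L := by
  rw [permMat_eq_pullbackMatrix]
  exact gnn_perm_equivariant_general Fdim K Ψ φ (pullbackMatrix_conj_mul σ H) Z L
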